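/- Let l ≥ 2 be an integer and let p_n/q_n (n ≥ 0) denote the convergents of the regular continued fraction expansion of e^{1/l}. Then ∑_{n=0}^∞ |q_n·e^{1/l} − p_n| = e^{1/l}·√(π/l)·erf(1/√l) = (2·e^{1/l}/√l)·∫_0^{1/√l} e^{−t²} dt. -/

import Mathlib

/-! If `v = r₀ / r₁` and `rₙ = bₙ rₙ₊₁ + rₙ₊₂` are the steps of the Euclidean algorithm, then
the `bₙ` are the partial quotients of `v` and `|qₙ r₀ - pₙ r₁| = rₙ₊₂`. For `c = 1 / l` the
remainders of `r₀ = exp c`, `r₁ = 1` are multiples of the integrals `∫₀¹ xⁱ (1 - x)ʲ exp (c x) dx`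
with `(i, j) = (n, n), (n + 1, n), (n, n + 1)`, whose contiguity relations are the Euclidean steps.
As `rₙ = rₙ₊₁ + rₙ₊₂` for `n ≡ 2` mod `3`, the errors add up to twice the sum of the diagonal
integrals, which is an exponential series under the integral sign, and completing the square turns
it into a Gaussian integral. -/

open Real Filter

open Finset intervalIntegral
open scoped Nat

section ContinuedFraction

variable {K : Type*} [Field K] [LinearOrder K] [IsStrictOrderedRing K]

/-- The infinite Euclidean algorithm on `r 0` and `r 1`, with quotients `b n` and remainders
`r (n + 2)`. The pair starts at an arbitrary `r 0`, so that `b 0` may be any integer. -/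
structure IsEuclideanExpansion (b : ℕ → ℤ) (r : ℕ → K) : Prop where
  pos : ∀ n, 0 < r (n + 1)
  one_le : ∀ n, 1 ≤ b (n + 1)
  eq_add : ∀ n, r n = b n * r (n + 1) + r (n + 2)

namespace IsEuclideanExpansion

variable {b : ℕ → ℤ} {r : ℕ → K}

lemma lt (h : IsEuclideanExpansion b r) (n : ℕ) : r (n + 2) < r (n + 1) := by
  have hb : (1 : K) ≤ b (n + 1) := mod_cast h.one_le n
  calc r (n + 2) ≤ b (n + 1) * r (n + 2) := le_mul_of_one_le_left (h.pos (n + 1)).le hb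
    _ < b (n + 1) * r (n + 2) + r (n + 3) := lt_add_of_pos_right _ (h.pos (n + 2))
    _ = r (n + 1) := (h.eq_add (n + 1)).symm

variable [FloorRing K]

lemma intFractPair_of_div (h : IsEuclideanExpansion b r) (n : ℕ) :
    GenContFract.IntFractPair.of (r n / r (n + 1)) = ⟨b n, r (n + 2) / r (n + 1)⟩ := by
  have hdiv : r n / r (n + 1) = b n + r (n + 2) / r (n + 1) := by
    rw [h.eq_add n, add_div, mul_div_cancel_right₀ _ (h.pos n).ne']
  have hfloor : ⌊r n / r (n + 1)⌋ = b n := by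
    rw [hdiv, Int.floor_intCast_add, Int.floor_eq_zero_iff.2, add_zero]
    exact ⟨(div_pos (h.pos (n + 1)) (h.pos n)).le, (div_lt_one (h.pos n)).2 (h.lt n)⟩
  rw [GenContFract.IntFractPair.of, Int.fract, hfloor, hdiv, add_sub_cancel_left]

lemma stream_eq (h : IsEuclideanExpansion b r) (n : ℕ) :
    GenContFract.IntFractPair.stream (r 0 / r 1) n = some ⟨b n, r (n + 2) / r (n + 1)⟩ := by
  induction n with
  | zero => rw [GenContFract.IntFractPair.stream_zero, h.intFractPair_of_div]
  | succ n ih =>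
    rw [GenContFract.IntFractPair.stream_succ_of_some ih
      (div_pos (h.pos (n + 1)) (h.pos n)).ne', inv_div, h.intFractPair_of_div]

lemma of_div_s_get? (h : IsEuclideanExpansion b r) (n : ℕ) :
    (GenContFract.of (r 0 / r 1)).s.get? n = some ⟨1, b (n + 1)⟩ :=
  GenContFract.get?_of_eq_some_of_succ_get?_intFractPair_stream (h.stream_eq (n + 1))

lemma of_div_h (h : IsEuclideanExpansion b r) : (GenContFract.of (r 0 / r 1)).h = b 0 := by
  rw [GenContFract.of_h_eq_floor]
  exact congrArg (fun p ↦ (p.b : K)) (h.intFractPair_of_div 0)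

theorem dens_mul_sub_nums_mul (h : IsEuclideanExpansion b r) (n : ℕ) :
    (GenContFract.of (r 0 / r 1)).dens n * r 0 - (GenContFract.of (r 0 / r 1)).nums n * r 1 =
      (-1) ^ n * r (n + 2) := by
  induction n using Nat.twoStepInduction with
  | zero =>
    rw [GenContFract.zeroth_den_eq_one, GenContFract.zeroth_num_eq_h, h.of_div_h]
    linear_combination h.eq_add 0
  | one =>
    rw [GenContFract.first_den_eq (h.of_div_s_get? 0),
      GenContFract.first_num_eq (h.of_div_s_get? 0), h.of_div_h]
    linear_combination b 1 * h.eq_add 0 - h.eq_add 1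
  | more n ih₀ ih₁ =>
    rw [GenContFract.dens_recurrence (h.of_div_s_get? (n + 1)) rfl rfl,
      GenContFract.nums_recurrence (h.of_div_s_get? (n + 1)) rfl rfl]
    linear_combination b (n + 2) * ih₁ + ih₀ + (-1) ^ n * h.eq_add (n + 2)

theorem abs_dens_mul_sub_nums_mul (h : IsEuclideanExpansion b r) (n : ℕ) :
    |(GenContFract.of (r 0 / r 1)).dens n * r 0 - (GenContFract.of (r 0 / r 1)).nums n * r 1| =
      r (n + 2) := by
  rw [h.dens_mul_sub_nums_mul, abs_mul, abs_neg_one_pow, one_mul, abs_of_pos (h.pos (n + 1))]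

end IsEuclideanExpansion

end ContinuedFraction

section Series

lemma sum_range_mul_eq_sum_sum {M : Type*} [AddCommMonoid M] (f : ℕ → M) (m n : ℕ) :
    ∑ k ∈ range (m * n), f k = ∑ j ∈ range n, ∑ i ∈ range m, f (m * j + i) := by
  induction n with
  | zero => simp only [mul_zero, range_zero, sum_empty]
  | succ n ih => rw [mul_add_one, sum_range_add, ih, sum_range_succ]

lemma hasSum_of_hasSum_sum_range_mul_add {f : ℕ → ℝ} (hf : ∀ k, 0 ≤ f k) {m : ℕ} (hm : 0 < m)
    {S : ℝ} (h : HasSum (fun n ↦ ∑ i ∈ range m, f (m * n + i)) S) : HasSum f S := by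
  have hmono : Monotone fun n ↦ ∑ k ∈ range n, f k := fun _ _ hab ↦
    sum_le_sum_of_subset_of_nonneg (range_mono hab) fun k _ _ ↦ hf k
  rw [hasSum_iff_tendsto_nat_of_nonneg hf,
    tendsto_iff_tendsto_subseq_of_monotone hmono (tendsto_id.const_mul_atTop' hm)]
  simpa only [Function.comp_def, id, sum_range_mul_eq_sum_sum] using h.tendsto_sum_nat

lemma hasSum_pow_div_factorial (x : ℝ) : HasSum (fun n : ℕ ↦ x ^ n / n !) (exp x) := by
  rw [exp_eq_exp_ℝ]
  exact NormedSpace.expSeries_div_hasSum_exp x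

lemma hasSum_integral_pow_div_factorial_mul {f g : ℝ → ℝ} {a b : ℝ}
    (hf : ContinuousOn f (Set.uIcc a b)) (hg : ContinuousOn g (Set.uIcc a b)) :
    HasSum (fun n : ℕ ↦ ∫ x in a..b, f x ^ n / n ! * g x) (∫ x in a..b, exp (f x) * g x) := by
  have hbound (x : ℝ) : HasSum (fun n : ℕ ↦ |f x| ^ n / n ! * |g x|) (exp |f x| * |g x|) :=
    (hasSum_pow_div_factorial _).mul_right _
  refine hasSum_integral_of_dominated_convergence (fun n x ↦ |f x| ^ n / n ! * |g x|)
    (fun n ↦ ?_) (fun n ↦ ?_) ?_ ?_ ?_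
  · have hcont : ContinuousOn (fun x ↦ f x ^ n / n ! * g x) (Set.uIcc a b) :=
      ((hf.pow n).div_const _).mul hg
    exact (hcont.mono Set.uIoc_subset_uIcc).aestronglyMeasurable measurableSet_uIoc
  · exact .of_forall fun x _ ↦ by simp
  · exact .of_forall fun x _ ↦ (hbound x).summable
  · simp_rw [fun x ↦ (hbound x).tsum_eq]
    exact (hf.abs.rexp.mul hg.abs).intervalIntegrable
  · exact .of_forall fun x _ ↦ (hasSum_pow_div_factorial _).mul_right _

lemma add_one_mul_pow_div_factorial {K : Type*} [Field K] [CharZero K] (x : K) (n : ℕ) :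
    (n + 1) * (x ^ (n + 1) / (n + 1)!) = x * (x ^ n / n !) := by
  have hn : (n : K) + 1 ≠ 0 := n.cast_add_one_ne_zero
  rw [Nat.factorial_succ, Nat.cast_mul, Nat.cast_succ]
  field_simp
  ring

end Series

section BetaExpIntegral

/-- The Beta integral `∫₀¹ xⁱ (1 - x)ʲ dx` with the exponential weight `exp (c x)`. -/
noncomputable def betaExpIntegral (c : ℝ) (i j : ℕ) : ℝ :=
  ∫ x in (0 : ℝ)..1, x ^ i * (1 - x) ^ j * exp (c * x)

variable (c : ℝ) (i j : ℕ)

lemma betaExpIntegral_pos : 0 < betaExpIntegral c i j := by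
  refine intervalIntegral_pos_of_pos_on (Continuous.intervalIntegrable (by fun_prop) _ _)
    (fun x hx ↦ ?_) one_pos
  have hx₀ : 0 < x := hx.1
  have hx₁ : 0 < 1 - x := sub_pos.2 hx.2
  positivity

lemma betaExpIntegral_eq_add :
    betaExpIntegral c i j = betaExpIntegral c (i + 1) j + betaExpIntegral c i (j + 1) := by
  unfold betaExpIntegral
  rw [← integral_add (Continuous.intervalIntegrable (by fun_prop) _ _)
    (Continuous.intervalIntegrable (by fun_prop) _ _)]
  congr 1 with x
  ring

/-- Truncated subtraction is harmless: where `i - 1` truncates, its coefficient `i` vanishes. -/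
lemma betaExpIntegral_by_parts :
    i * betaExpIntegral c (i - 1) j - j * betaExpIntegral c i (j - 1) + c * betaExpIntegral c i j =
      0 ^ j * exp c - 0 ^ i := by
  have hderiv (x : ℝ) : HasDerivAt (fun x ↦ x ^ i * (1 - x) ^ j * exp (c * x))
      (i * (x ^ (i - 1) * (1 - x) ^ j * exp (c * x)) - j * (x ^ i * (1 - x) ^ (j - 1) * exp (c * x))
        + c * (x ^ i * (1 - x) ^ j * exp (c * x))) x := by
    convert! ((hasDerivAt_pow i x).mul (((hasDerivAt_id x).const_sub 1).pow j)).mul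
      ((hasDerivAt_id x).const_mul c).exp using 1
    simp only [id, Pi.mul_apply, Pi.pow_apply]
    ring
  have hftc := integral_eq_sub_of_hasDerivAt (a := 0) (b := 1) (fun x _ ↦ hderiv x)
    (Continuous.intervalIntegrable (by fun_prop) _ _)
  rw [intervalIntegral.integral_add, intervalIntegral.integral_sub,
    intervalIntegral.integral_const_mul, intervalIntegral.integral_const_mul,
    intervalIntegral.integral_const_mul] at hftc
  · simpa [betaExpIntegral] using hftc
  all_goals exact Continuous.intervalIntegrable (by fun_prop) _ _

end BetaExpIntegral

section ExpRemainder

/-- The remainders of the Euclidean algorithm on `exp c` and `1`, when `c = 1 / l` for an integer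
`l ≥ 2`. From index `2` on they come in blocks of three, with `n = k / 3` numbering the blocks. -/
noncomputable def expRemainder (c : ℝ) : ℕ → ℝ
  | 0 => exp c
  | 1 => 1
  | k + 2 =>
    let n := k / 3
    c ^ (n + 1) / n ! *
      match k % 3 with
      | 0 => betaExpIntegral c n n
      | 1 => betaExpIntegral c (n + 1) n
      | _ => betaExpIntegral c n (n + 1)

variable (c : ℝ) (n : ℕ)

lemma expRemainder_three_mul_add_two :
    expRemainder c (3 * n + 2) = c ^ (n + 1) / n ! * betaExpIntegral c n n := by
  have hdiv : 3 * n / 3 = n := by lia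
  have hmod : 3 * n % 3 = 0 := by lia
  simp only [expRemainder, hdiv, hmod]

lemma expRemainder_three_mul_add_three :
    expRemainder c (3 * n + 3) = c ^ (n + 1) / n ! * betaExpIntegral c (n + 1) n := by
  have hdiv : (3 * n + 1) / 3 = n := by lia
  have hmod : (3 * n + 1) % 3 = 1 := by lia
  simp only [expRemainder, hdiv, hmod]

lemma expRemainder_three_mul_add_four :
    expRemainder c (3 * n + 4) = c ^ (n + 1) / n ! * betaExpIntegral c n (n + 1) := by
  have hdiv : (3 * n + 2) / 3 = n := by lia
  have hmod : (3 * n + 2) % 3 = 2 := by lia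
  simp only [expRemainder, hdiv, hmod]

lemma expRemainder_pos {c : ℝ} (hc : 0 < c) : ∀ n, 0 < expRemainder c n
  | 0 => exp_pos c
  | 1 => one_pos
  | k + 2 => by
    refine mul_pos (by positivity) ?_
    split <;> exact betaExpIntegral_pos ..

lemma expRemainder_three_mul_eq_add :
    expRemainder c (3 * n) = expRemainder c (3 * n + 1) + expRemainder c (3 * n + 2) := by
  rw [expRemainder_three_mul_add_two]
  cases n with
  | zero =>
    have hparts : c * betaExpIntegral c 0 0 = exp c - 1 := by
      simpa using betaExpIntegral_by_parts c 0 0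
    simp only [expRemainder, zero_add, pow_one, Nat.factorial_zero, Nat.cast_one, div_one]
    linear_combination -hparts
  | succ n =>
    have hparts : (n + 1) * betaExpIntegral c n (n + 1) - (n + 1) * betaExpIntegral c (n + 1) n +
        c * betaExpIntegral c (n + 1) (n + 1) = 0 := by
      simpa using betaExpIntegral_by_parts c (n + 1) (n + 1)
    rw [mul_add_one, expRemainder_three_mul_add_three, expRemainder_three_mul_add_four]
    refine mul_left_cancel₀ n.cast_add_one_ne_zero ?_
    linear_combination -(c ^ (n + 1) / n !) * hparts -
      c * betaExpIntegral c (n + 1) (n + 1) * add_one_mul_pow_div_factorial c n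

lemma mul_expRemainder_three_mul_add_one_eq_add :
    c * expRemainder c (3 * n + 1) =
      (2 * n + 1 - c) * expRemainder c (3 * n + 2) + c * expRemainder c (3 * n + 3) := by
  rw [expRemainder_three_mul_add_two, expRemainder_three_mul_add_three]
  have hsplit := betaExpIntegral_eq_add c n n
  cases n with
  | zero =>
    have hparts : -betaExpIntegral c 0 0 + c * betaExpIntegral c 0 1 = -1 := by
      simpa using betaExpIntegral_by_parts c 0 1
    simp only [expRemainder, mul_zero, zero_add, pow_one, Nat.factorial_zero, Nat.cast_zero,
      Nat.cast_one, div_one] at hsplit ⊢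
    linear_combination c * hparts + c ^ 2 * hsplit
  | succ n =>
    have hsplit' := betaExpIntegral_eq_add c n (n + 1)
    have hparts : (n + 1) * betaExpIntegral c n (n + 2) -
        (n + 2) * betaExpIntegral c (n + 1) (n + 1) +
        c * betaExpIntegral c (n + 1) (n + 2) = 0 := by
      simpa using betaExpIntegral_by_parts c (n + 1) (n + 2)
    rw [show 3 * (n + 1) + 1 = 3 * n + 4 by ring, expRemainder_three_mul_add_four]
    push_cast
    linear_combination c ^ (n + 2) / (n + 1)! * (hparts + (n + 1) * hsplit' + c * hsplit) -
      c * betaExpIntegral c n (n + 1) * add_one_mul_pow_div_factorial c n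

lemma expRemainder_three_mul_add_two_eq_add :
    expRemainder c (3 * n + 2) = expRemainder c (3 * n + 3) + expRemainder c (3 * n + 4) := by
  rw [expRemainder_three_mul_add_two, expRemainder_three_mul_add_three,
    expRemainder_three_mul_add_four, betaExpIntegral_eq_add, mul_add]

/-- The partial quotients of `exp (1 / l) = [1; l - 1, 1, 1, 3 l - 1, 1, 1, 5 l - 1, …]`. -/
def expRecipPartialQuot (l n : ℕ) : ℤ :=
  if n % 3 = 1 then (2 * (n / 3 : ℕ) + 1) * l - 1 else 1

theorem isEuclideanExpansion_expRemainder {l : ℕ} (hl : 2 ≤ l) :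
    IsEuclideanExpansion (expRecipPartialQuot l) (expRemainder (1 / l)) where
  pos n := expRemainder_pos (by positivity) (n + 1)
  one_le n := by
    unfold expRecipPartialQuot
    split_ifs
    · nlinarith
    · rfl
  eq_add n := by
    have hl₀ : (l : ℝ) ≠ 0 := by positivity
    obtain ⟨m, rfl | rfl | rfl⟩ : ∃ m, n = 3 * m ∨ n = 3 * m + 1 ∨ n = 3 * m + 2 :=
      ⟨n / 3, by lia⟩
    · have hquot : expRecipPartialQuot l (3 * m) = 1 := if_neg (by lia)
      rw [hquot, Int.cast_one, one_mul, expRemainder_three_mul_eq_add]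
    · have hquot : expRecipPartialQuot l (3 * m + 1) = (2 * m + 1) * l - 1 := by
        rw [expRecipPartialQuot, if_pos (by lia), show (3 * m + 1) / 3 = m by lia]
      have hstep := mul_expRemainder_three_mul_add_one_eq_add (1 / l) m
      field_simp at hstep
      rw [hquot]
      push_cast
      linear_combination hstep
    · have hquot : expRecipPartialQuot l (3 * m + 2) = 1 := if_neg (by lia)
      rw [hquot, Int.cast_one, one_mul, expRemainder_three_mul_add_two_eq_add]

end ExpRemainder

section ErrorSum

variable {c : ℝ}

lemma mul_integral_exp_mul_one_sub_mul_exp (hc : 0 ≤ c) :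
    c * ∫ x in (0 : ℝ)..1, exp (c * (x * (1 - x))) * exp (c * x) =
      √c * exp c * ∫ t in (0 : ℝ)..√c, exp (-t ^ 2) := by
  have hsq : √c ^ 2 = c := sq_sqrt hc
  have hsquare (x : ℝ) :
      exp (c * (x * (1 - x))) * exp (c * x) = exp c * exp (-(√c - √c * x) ^ 2) := by
    rw [← exp_add, ← exp_add]
    congr 1
    linear_combination (1 - x) ^ 2 * hsq
  have hsubst := mul_integral_comp_sub_mul (f := fun t ↦ exp (-t ^ 2)) (a := 0) (b := 1) √c √c
  simp only [mul_one, mul_zero, sub_self, sub_zero] at hsubst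
  simp_rw [hsquare]
  rw [intervalIntegral.integral_const_mul, ← hsubst]
  linear_combination (-exp c * ∫ x in (0 : ℝ)..1, exp (-(√c - √c * x) ^ 2)) * hsq

lemma hasSum_expRemainder_three_mul_add_two (hc : 0 ≤ c) :
    HasSum (fun n ↦ expRemainder c (3 * n + 2))
      (√c * exp c * ∫ t in (0 : ℝ)..√c, exp (-t ^ 2)) := by
  rw [← mul_integral_exp_mul_one_sub_mul_exp hc]
  refine ((hasSum_integral_pow_div_factorial_mul (f := fun x ↦ c * (x * (1 - x)))
    (g := fun x ↦ exp (c * x)) (by fun_prop) (by fun_prop)).mul_left c).congr_fun fun n ↦ ?_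
  rw [expRemainder_three_mul_add_two, betaExpIntegral, ← intervalIntegral.integral_const_mul,
    ← intervalIntegral.integral_const_mul]
  congr 1 with x
  rw [mul_pow, mul_pow]
  ring

theorem hasSum_expRemainder_add_two (hc : 0 < c) :
    HasSum (fun n ↦ expRemainder c (n + 2))
      (2 * (√c * exp c * ∫ t in (0 : ℝ)..√c, exp (-t ^ 2))) := by
  have hdiag := (hasSum_expRemainder_three_mul_add_two hc.le).mul_left 2
  refine hasSum_of_hasSum_sum_range_mul_add (fun n ↦ (expRemainder_pos hc (n + 2)).le)
    (Nat.succ_pos 2) (hdiag.congr_fun fun n ↦ ?_)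
  simp only [sum_range_succ, range_zero, sum_empty]
  linear_combination -expRemainder_three_mul_add_two_eq_add c n

end ErrorSum

/-- **Error sum of `e^(1/l)` as an error-function integral.**
For an integer `l ≥ 2`, with `pₙ/qₙ` the convergents of the regular continued fraction
of `e^(1/l)`, the error sum `∑ₙ |qₙ e^(1/l) − pₙ|` equals
`e^(1/l) √(π/l) erf(1/√l) = (2 e^(1/l)/√l) ∫_0^{1/√l} e^{-t²} dt`,
where `erf z = (2/√π) ∫_0^z e^{-t²} dt`. -/
theorem error_sum_exp_recip
    (l : ℕ) (hl : 2 ≤ l)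
    (α : ℝ) (hα : α = Real.exp (1 / l))
    (p q : ℕ → ℝ)
    (hp : ∀ n, p n = (GenContFract.of α).nums n)
    (hq : ∀ n, q n = (GenContFract.of α).dens n)
    (erf : ℝ → ℝ)
    (herf : ∀ z : ℝ, erf z = (2 / Real.sqrt π) * ∫ t in (0:ℝ)..z, Real.exp (-t ^ 2)) :
    (∑' n : ℕ, |q n * α - p n|)
        = α * Real.sqrt (π / l) * erf (1 / Real.sqrt l) ∧
    (∑' n : ℕ, |q n * α - p n|)
        = (2 * α / Real.sqrt l) * ∫ t in (0:ℝ)..(1 / Real.sqrt l), Real.exp (-t ^ 2) := by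
  subst hα
  have herr (n : ℕ) : |q n * exp (1 / l) - p n| = expRemainder (1 / l) (n + 2) := by
    simpa [expRemainder, hp, hq] using
      (isEuclideanExpansion_expRemainder hl).abs_dens_mul_sub_nums_mul n
  have hsum : (∑' n : ℕ, |q n * exp (1 / l) - p n|)
      = (2 * exp (1 / l) / √l) * ∫ t in (0:ℝ)..(1 / √l), exp (-t ^ 2) := by
    simp_rw [herr]
    rw [(hasSum_expRemainder_add_two (by positivity)).tsum_eq, sqrt_div zero_le_one, sqrt_one]
    ring
  refine ⟨?_, hsum⟩
  have hπ : √π ≠ 0 := by positivity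
  rw [hsum, herf, sqrt_div pi_pos.le]
  field_simp
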